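/- arXiv:2511.05287 — 2 statements merged into one kernel-verified Lean document; each statement's English description precedes it below -/
import Mathlib

section
/- Let R be a unique factorization domain and let f be an algebraically primitive Dirichlet polynomial over R with min-degree m and degree n (f(m) ≠ 0, f(n) ≠ 0, m < n), write a_i = f(i), and let p be a prime element of R. If either (i) p ∣ a_i for every i with m ≤ i ≤ n−1, p ∤ a_n and p² ∤ a_m, or (ii) p ∣ a_i for every i with m+1 ≤ i ≤ n, p ∤ a_m and p² ∤ a_n, then f is irreducible over R. -/
/-!
Suppose `f = g * h` with `g`, `h` nonconstant, where `g` has min-degree `a` and degree `b`, and `h`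
has min-degree `c` and degree `d`. Lowest and leading coefficients are multiplicative, so
`m = a * c`, `n = b * d`, `f m = g a * h c` and `f n = g b * h d` (`HasDegrees.mul`). Algebraic
primitivity forces `a < b` and `c < d` (`HasDegrees.lt_of_mul`).

In case (i), `p` divides neither `g b` nor `h d`. If `p ∤ h c`, let `j` be the least index with
`p ∤ g j`; modulo `p` the coefficient of `f` at `j * c` is `g j * h c`, which is nonzero, although
`j * c ≤ b * c < b * d = n`. Hence `p ∣ h c`, symmetrically `p ∣ g a`, and so `p ^ 2 ∣ f m`, a
contradiction (`dvd_low_of_mul`). Case (ii) is the mirror image, using the greatest index `j` with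
`p ∤ g j` and the coefficient at `j * d` (`dvd_high_of_mul`).
-/

namespace DirichletPoly

variable {R : Type*}

/-- A Dirichlet polynomial is an arithmetic function with finite support. -/
def IsDP [Zero R] (f : ArithmeticFunction R) : Prop := (Function.support ⇑f).Finite

/-- `f` is nonconstant: its support contains some `i ≥ 2`. -/
def Nonconst [Zero R] (f : ArithmeticFunction R) : Prop := ∃ i : ℕ, 2 ≤ i ∧ f i ≠ 0

/-- `f` is irreducible over `R`: it cannot be written as a product of two nonconstant
Dirichlet polynomials with coefficients in `R`. -/
def IrreducibleDP [CommSemiring R] (f : ArithmeticFunction R) : Prop :=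
  ¬ ∃ g h : ArithmeticFunction R, IsDP g ∧ IsDP h ∧ Nonconst g ∧ Nonconst h ∧ f = g * h

/-- `f` is algebraically primitive: the gcd of the elements of its support is `1`. -/
def AlgPrimitive [Zero R] (f : ArithmeticFunction R) : Prop :=
  ∀ d : ℕ, (∀ i : ℕ, f i ≠ 0 → d ∣ i) → d = 1

/-- Modulo `q`, if `q` divides `g x` for `x < a` and `h y` for `y < c`, only the pair `(a, c)`
contributes to `(g * h) (a * c)`. Taking `q = 0` gives the lowest coefficient of a product. -/
lemma dvd_mul_apply_sub_of_lt [CommRing R] {g h : ArithmeticFunction R} {q : R} {a c : ℕ}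
    (ha : 0 < a) (hc : 0 < c) (hg : ∀ x < a, q ∣ g x) (hh : ∀ y < c, q ∣ h y) :
    q ∣ (g * h) (a * c) - g a * h c := by
  have hmem : (a, c) ∈ (a * c).divisorsAntidiagonal := by
    simp [Nat.mem_divisorsAntidiagonal, ha.ne', hc.ne']
  rw [ArithmeticFunction.mul_apply, ← Finset.add_sum_erase _ _ hmem, add_sub_cancel_left]
  refine Finset.dvd_sum fun xy hxy => ?_
  obtain ⟨x, y⟩ := xy
  obtain ⟨hne, hxy⟩ := Finset.mem_erase.1 hxy
  have hmul : x * y = a * c := (Nat.mem_divisorsAntidiagonal.1 hxy).1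
  rcases lt_or_ge x a with hx | hx
  · exact (hg x hx).mul_right _
  rcases lt_or_ge y c with hy | hy
  · exact (hh y hy).mul_left _
  refine absurd ?_ hne
  have hxa : x = a := by
    by_contra hxa
    have : a < x := lt_of_le_of_ne hx (Ne.symm hxa)
    nlinarith
  subst hxa
  rw [Nat.eq_of_mul_eq_mul_left ha hmul]

/-- Modulo `q`, if `q` divides `g x` for `x > b` and `h y` for `y > d`, only the pair `(b, d)`
contributes to `(g * h) (b * d)`. Taking `q = 0` gives the leading coefficient of a product. -/
lemma dvd_mul_apply_sub_of_gt [CommRing R] {g h : ArithmeticFunction R} {q : R} {b d : ℕ}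
    (hb : 0 < b) (hd : 0 < d) (hg : ∀ x, b < x → q ∣ g x) (hh : ∀ y, d < y → q ∣ h y) :
    q ∣ (g * h) (b * d) - g b * h d := by
  have hmem : (b, d) ∈ (b * d).divisorsAntidiagonal := by
    simp [Nat.mem_divisorsAntidiagonal, hb.ne', hd.ne']
  rw [ArithmeticFunction.mul_apply, ← Finset.add_sum_erase _ _ hmem, add_sub_cancel_left]
  refine Finset.dvd_sum fun xy hxy => ?_
  obtain ⟨x, y⟩ := xy
  obtain ⟨hne, hxy⟩ := Finset.mem_erase.1 hxy
  have hmul : x * y = b * d := (Nat.mem_divisorsAntidiagonal.1 hxy).1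
  rcases lt_or_ge b x with hx | hx
  · exact (hg x hx).mul_right _
  rcases lt_or_ge d y with hy | hy
  · exact (hh y hy).mul_left _
  refine absurd ?_ hne
  have hxb : x = b := by
    by_contra hxb
    have : x < b := lt_of_le_of_ne hx hxb
    nlinarith
  subst hxb
  rw [Nat.eq_of_mul_eq_mul_left hb hmul]

lemma exists_of_mul_apply_ne_zero [CommRing R] {g h : ArithmeticFunction R} {k : ℕ}
    (hk : (g * h) k ≠ 0) : ∃ x y, x * y = k ∧ g x ≠ 0 ∧ h y ≠ 0 := by
  rw [ArithmeticFunction.mul_apply] at hk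
  obtain ⟨⟨x, y⟩, hxy, hne⟩ := Finset.exists_ne_zero_of_sum_ne_zero hk
  exact ⟨x, y, (Nat.mem_divisorsAntidiagonal.1 hxy).1, left_ne_zero_of_mul hne,
    right_ne_zero_of_mul hne⟩

lemma pos_of_apply_ne_zero [Zero R] {g : ArithmeticFunction R} {x : ℕ} (hx : g x ≠ 0) : 0 < x :=
  Nat.pos_of_ne_zero fun h0 => hx (by simp [h0])

/-- `a` is the min-degree and `b` the degree of `g`. -/
structure HasDegrees [Zero R] (g : ArithmeticFunction R) (a b : ℕ) : Prop where
  low : g a ≠ 0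
  high : g b ≠ 0
  le_low : ∀ x, g x ≠ 0 → a ≤ x
  le_high : ∀ x, g x ≠ 0 → x ≤ b

lemma IsDP.exists_hasDegrees [Zero R] {g : ArithmeticFunction R} (hg : IsDP g)
    (hne : Nonconst g) : ∃ a b, HasDegrees g a b := by
  obtain ⟨i, -, hi⟩ := hne
  have hs : hg.toFinset.Nonempty := ⟨i, hg.mem_toFinset.2 hi⟩
  exact ⟨_, _, hg.mem_toFinset.1 (Finset.min'_mem _ hs), hg.mem_toFinset.1 (Finset.max'_mem _ hs),
    fun x hx => Finset.min'_le _ _ (hg.mem_toFinset.2 hx),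
    fun x hx => Finset.le_max' _ _ (hg.mem_toFinset.2 hx)⟩

/-- A nonconstant factor of an algebraically primitive Dirichlet polynomial is not supported at a
single point `a ≥ 2`, since `a` would divide the support of the product. -/
lemma HasDegrees.lt_of_mul [CommRing R] {g h : ArithmeticFunction R} {a b : ℕ}
    (hg : HasDegrees g a b) (hne : Nonconst g) (hprim : AlgPrimitive (g * h)) : a < b := by
  refine lt_of_le_of_ne (hg.le_low _ hg.high) fun hab => ?_
  subst hab
  obtain ⟨i, hi2, hi⟩ := hne
  have ha : a = 1 := hprim a fun k hk => by
    obtain ⟨x, y, rfl, hx, -⟩ := exists_of_mul_apply_ne_zero hk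
    rw [le_antisymm (hg.le_low x hx) (hg.le_high x hx)]
    exact dvd_mul_right _ _
  have := hg.le_high i hi
  omega

lemma HasDegrees.mul [CommRing R] [IsDomain R] {g h : ArithmeticFunction R} {a b c d : ℕ}
    (hg : HasDegrees g a b) (hh : HasDegrees h c d) :
    (g * h) (a * c) = g a * h c ∧ (g * h) (b * d) = g b * h d ∧
      HasDegrees (g * h) (a * c) (b * d) := by
  have hlow : (g * h) (a * c) = g a * h c := by
    refine sub_eq_zero.1 (zero_dvd_iff.1 (dvd_mul_apply_sub_of_lt (pos_of_apply_ne_zero hg.low)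
      (pos_of_apply_ne_zero hh.low) (fun x hx => ?_) fun y hy => ?_))
    · exact zero_dvd_iff.2 (by_contra fun h0 => (hg.le_low x h0).not_gt hx)
    · exact zero_dvd_iff.2 (by_contra fun h0 => (hh.le_low y h0).not_gt hy)
  have hhigh : (g * h) (b * d) = g b * h d := by
    refine sub_eq_zero.1 (zero_dvd_iff.1 (dvd_mul_apply_sub_of_gt (pos_of_apply_ne_zero hg.high)
      (pos_of_apply_ne_zero hh.high) (fun x hx => ?_) fun y hy => ?_))
    · exact zero_dvd_iff.2 (by_contra fun h0 => (hg.le_high x h0).not_gt hx)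
    · exact zero_dvd_iff.2 (by_contra fun h0 => (hh.le_high y h0).not_gt hy)
  refine ⟨hlow, hhigh, hlow ▸ mul_ne_zero hg.low hh.low, hhigh ▸ mul_ne_zero hg.high hh.high,
    fun k hk => ?_, fun k hk => ?_⟩ <;>
  obtain ⟨x, y, rfl, hx, hy⟩ := exists_of_mul_apply_ne_zero hk
  · exact Nat.mul_le_mul (hg.le_low x hx) (hh.le_low y hy)
  · exact Nat.mul_le_mul (hg.le_high x hx) (hh.le_high y hy)

lemma HasDegrees.unique [Zero R] {f : ArithmeticFunction R} {a b m n : ℕ}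
    (h₁ : HasDegrees f a b) (h₂ : HasDegrees f m n) : a = m ∧ b = n :=
  ⟨le_antisymm (h₁.le_low _ h₂.low) (h₂.le_low _ h₁.low),
    le_antisymm (h₂.le_high _ h₁.high) (h₁.le_high _ h₂.high)⟩

/-- If `p ∤ g b` and `p` divides every coefficient of `g * h` below `b * d`, then `p` divides the
lowest coefficient of `h`: otherwise, for the least `j` with `p ∤ g j`, the coefficient of `g * h` at
`j * c < b * d` would not be divisible by `p`. -/
lemma dvd_low_of_mul [CommRing R] [IsDomain R] {g h : ArithmeticFunction R} {b c d : ℕ} {p : R}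
    (hp : Prime p) (hh : HasDegrees h c d) (hcd : c < d)
    (hgb : ¬ p ∣ g b) (hf : ∀ i, i < b * d → p ∣ (g * h) i) : p ∣ h c := by
  classical
  by_contra hpc
  have hex : ∃ j, ¬ p ∣ g j := ⟨b, hgb⟩
  have hj := Nat.find_spec hex
  have hjb : Nat.find hex ≤ b := Nat.find_min' hex hgb
  have hjmin : ∀ x < Nat.find hex, p ∣ g x := fun x hx => not_not.1 (Nat.find_min hex hx)
  generalize Nat.find hex = j at hj hjb hjmin
  have hj0 : 0 < j := pos_of_apply_ne_zero fun h0 => hj (h0 ▸ dvd_zero p)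
  have hdvd := dvd_mul_apply_sub_of_lt hj0 (pos_of_apply_ne_zero hh.low) hjmin
    (fun y hy => by
      rw [by_contra fun h0 => (hh.le_low y h0).not_gt hy]
      exact dvd_zero p)
  have hlt : j * c < b * d := by nlinarith
  exact (hp.dvd_or_dvd ((dvd_sub_right (hf _ hlt)).1 hdvd)).elim hj hpc

/-- If `p ∤ g a` and `p` divides every coefficient of `g * h` above `a * c`, then `p` divides the
leading coefficient of `h`: otherwise, for the greatest `j` with `p ∤ g j`, the coefficient of `g * h` at
`j * d > a * c` would not be divisible by `p`. -/
lemma dvd_high_of_mul [CommRing R] [IsDomain R] {g h : ArithmeticFunction R} {a b c d : ℕ} {p : R}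
    (hp : Prime p) (hg : HasDegrees g a b) (hh : HasDegrees h c d) (hcd : c < d)
    (hga : ¬ p ∣ g a) (hf : ∀ i, a * c < i → p ∣ (g * h) i) : p ∣ h d := by
  classical
  by_contra hpd
  have hab : a ≤ b := hg.le_low _ hg.high
  have hj : ¬ p ∣ g (Nat.findGreatest (fun x => ¬ p ∣ g x) b) :=
    Nat.findGreatest_spec (P := fun x => ¬ p ∣ g x) hab hga
  have hja : a ≤ Nat.findGreatest (fun x => ¬ p ∣ g x) b := Nat.le_findGreatest hab hga
  have hjmax : ∀ x, Nat.findGreatest (fun x => ¬ p ∣ g x) b < x → p ∣ g x := fun x hx => by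
    by_contra hpx
    have hxb : x ≤ b := hg.le_high x fun h0 => hpx (h0 ▸ dvd_zero p)
    exact (Nat.le_findGreatest (P := fun x => ¬ p ∣ g x) hxb hpx).not_gt hx
  generalize Nat.findGreatest (fun x => ¬ p ∣ g x) b = j at hj hja hjmax
  have ha0 : 0 < a := pos_of_apply_ne_zero hg.low
  have hdvd := dvd_mul_apply_sub_of_gt (ha0.trans_le hja) (pos_of_apply_ne_zero hh.high) hjmax
    (fun y hy => by
      rw [by_contra fun h0 => (hh.le_high y h0).not_gt hy]
      exact dvd_zero p)
  have hlt : a * c < j * d := by nlinarith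
  exact (hp.dvd_or_dvd ((dvd_sub_right (hf _ hlt)).1 hdvd)).elim hj hpd

/-- Schönemann–Eisenstein analogue for Dirichlet polynomials. -/
theorem eisenstein_irreducible
    [CommRing R] [IsDomain R] [UniqueFactorizationMonoid R]
    (f : ArithmeticFunction R) (hfin : IsDP f) (hprim : AlgPrimitive f)
    (m n : ℕ) (hmn : m < n)
    (hmin : f m ≠ 0) (hmin' : ∀ i : ℕ, i < m → f i = 0)
    (hdeg : f n ≠ 0) (hdeg' : ∀ i : ℕ, n < i → f i = 0)
    (p : R) (hp : Prime p)
    (hyp : ((∀ i : ℕ, m ≤ i → i < n → p ∣ f i) ∧ ¬ p ∣ f n ∧ ¬ p ^ 2 ∣ f m) ∨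
           ((∀ i : ℕ, m < i → i ≤ n → p ∣ f i) ∧ ¬ p ∣ f m ∧ ¬ p ^ 2 ∣ f n)) :
    IrreducibleDP f := by
  rintro ⟨g, h, hg, hh, hgn, hhn, rfl⟩
  obtain ⟨a, b, hgd⟩ := hg.exists_hasDegrees hgn
  obtain ⟨c, d, hhd⟩ := hh.exists_hasDegrees hhn
  have hab : a < b := hgd.lt_of_mul hgn hprim
  have hcd : c < d := hhd.lt_of_mul hhn (mul_comm g h ▸ hprim)
  obtain ⟨hlow, hhigh, hd⟩ := hgd.mul hhd
  obtain ⟨rfl, rfl⟩ := hd.unique (m := m) (n := n) ⟨hmin, hdeg,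
    fun x hx => not_lt.1 fun hlt => hx (hmin' x hlt),
    fun x hx => not_lt.1 fun hlt => hx (hdeg' x hlt)⟩
  rcases hyp with ⟨hdvd, hpn, hpm⟩ | ⟨hdvd, hpm, hpn⟩
  · have hall : ∀ i, i < b * d → p ∣ (g * h) i := fun i hi => by
      rcases lt_or_ge i (a * c) with hlt | hge
      · exact hmin' i hlt ▸ dvd_zero p
      · exact hdvd i hge hi
    rw [hhigh] at hpn
    rw [hlow, sq] at hpm
    refine hpm (mul_dvd_mul ?_ ?_)
    · exact dvd_low_of_mul hp hgd hab (fun h0 => hpn (h0.mul_left _))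
        (by rwa [mul_comm h g, mul_comm d b])
    · exact dvd_low_of_mul hp hhd hcd (fun h0 => hpn (h0.mul_right _)) hall
  · have hall : ∀ i, a * c < i → p ∣ (g * h) i := fun i hi => by
      rcases lt_or_ge (b * d) i with hlt | hge
      · exact hdeg' i hlt ▸ dvd_zero p
      · exact hdvd i hi hge
    rw [hhigh, sq] at hpn
    rw [hlow] at hpm
    refine hpn (mul_dvd_mul ?_ ?_)
    · exact dvd_high_of_mul hp hhd hgd hab (fun h0 => hpm (h0.mul_left _))
        (by rwa [mul_comm h g, mul_comm c a])
    · exact dvd_high_of_mul hp hgd hhd hcd (fun h0 => hpm (h0.mul_right _)) hall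

end DirichletPoly
end

section
/- Let R be a unique factorization domain and let f and g be nonzero Dirichlet polynomials over R with deg f = m, deg g = n, m < n, and gcd(m,n) = 1. Let p be a prime element of R dividing neither the leading coefficient f(m) nor the leading coefficient g(n), and let k be a positive integer such that the gcd of k together with the integers ν_q(n) − ν_q(m) for all prime numbers q dividing m·n equals 1. Then the Dirichlet polynomial f + p^k·g (the function i ↦ f(i) + p^k·g(i)) is irreducible over R. -/
/-!
The proof is a Newton polygon argument for the `p`-adic valuation `v`, with `log i` as abscissa of
the index `i`. In `F = f + p ^ k g` one has `v (F m) = 0`, `v (F n) = k`, and every point of the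
diagram lies on or above the line joining `(log m, 0)` to `(log n, k)`. To stay with products
instead of logarithms, the height above this line is replaced by its exponential, the `weight`
`(n / m) ^ v (F i) / i ^ k`, whose minimum over the support of `F` is `1 / m ^ k`.

Suppose `F = G * H` with degrees `a * b = n`. The minimal weights of `G` and `H` have product at
least `1 / m ^ k` (`exists_weight_mul_le`). Since `p ∤ F m`, there are `i * j = m` with
`p ∤ G i`, `p ∤ H j`. The pairs `(a, b)` and `(i, j)` both have weight product `1 / m ^ k`, so all
four weights are minimal; in particular `(a / i) ^ k = (n / m) ^ t` with `t = v (G a)`. Comparing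
factorizations, the gcd hypothesis gives `k ∣ t` (`dvd_of_pow_eq`), and `0 ≤ t ≤ k`, so `t = 0` or
`v (H b) = 0`. If `t = 0` then `a = i` divides both `m` and `n`, so `a = 1` and `G` is constant;
the other case is the same for `H`.
-/

namespace DirichletPoly

variable {R : Type*}

/-- The weight of the index `i` in `G`: the exponential of `v_p(G i) · log ρ - k · log i`. On the
support, minimising it selects the points of the Newton diagram `(log i, v_p(G i))` lying on a
supporting line of slope `k / log ρ`. It is meaningful only where `G i ≠ 0`. -/
noncomputable def weight [CommRing R] (p : R) (ρ : ℝ) (k : ℕ) (G : ArithmeticFunction R)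
    (i : ℕ) : ℝ :=
  ρ ^ multiplicity p (G i) / (i : ℝ) ^ k

lemma exists_last_min (S : Finset ℕ) (hS : S.Nonempty) (w : ℕ → ℝ) :
    ∃ a ∈ S, ∀ i ∈ S, w a ≤ w i ∧ (w i = w a → i ≤ a) := by
  obtain ⟨x, hx, hmin⟩ := S.exists_min_image w hS
  obtain ⟨a, ha, hmax⟩ := (S.filter (fun i => w i = w x)).exists_max_image id ⟨x, by simp [hx]⟩
  simp only [Finset.mem_filter, id] at ha hmax
  refine ⟨a, ha.1, fun i hi => ⟨ha.2 ▸ hmin i hi, fun h => hmax i ⟨hi, h.trans ha.2⟩⟩⟩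

lemma IsDP.exists_finset [Zero R] {G : ArithmeticFunction R} (hG : IsDP G) :
    ∃ S : Finset ℕ, ∀ i, i ∈ S ↔ G i ≠ 0 := by
  unfold IsDP at hG
  exact ⟨hG.toFinset, fun i => by rw [Set.Finite.mem_toFinset, Function.mem_support]⟩

lemma pos_of_ne [Zero R] {G : ArithmeticFunction R} {i : ℕ} (h : G i ≠ 0) : 0 < i := by
  rcases Nat.eq_zero_or_pos i with rfl | hi
  · simp at h
  · exact hi

/-- The product of the minimal weights of `G` and `H` is at least the weight of some index in the
support of `G * H`: at the product of the two largest minimisers exactly one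
summand of the convolution has minimal `p`-adic valuation. -/
lemma exists_weight_mul_le [CommRing R] [IsDomain R] [UniqueFactorizationMonoid R]
    (G H : ArithmeticFunction R) (hG : IsDP G) (hH : IsDP H) (hG0 : ∃ i, G i ≠ 0)
    (hH0 : ∃ i, H i ≠ 0) (p : R) (hp : Prime p) (ρ : ℝ) (hρ : 1 < ρ) (k : ℕ) :
    ∃ a b, G a ≠ 0 ∧ H b ≠ 0 ∧ (∀ i, G i ≠ 0 → weight p ρ k G a ≤ weight p ρ k G i) ∧
      (∀ i, H i ≠ 0 → weight p ρ k H b ≤ weight p ρ k H i) ∧ (G * H) (a * b) ≠ 0 ∧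
      weight p ρ k (G * H) (a * b) ≤ weight p ρ k G a * weight p ρ k H b := by
  have fin : ∀ x : R, x ≠ 0 → FiniteMultiplicity p x := fun x hx =>
    FiniteMultiplicity.of_not_isUnit hp.not_isUnit hx
  obtain ⟨SG, hSG⟩ := hG.exists_finset
  obtain ⟨a, ha, hamin⟩ := exists_last_min SG (hG0.imp fun i hi => (hSG i).2 hi)
    (weight p ρ k G)
  obtain ⟨SH, hSH⟩ := hH.exists_finset
  obtain ⟨b, hb, hbmin⟩ := exists_last_min SH (hH0.imp fun i hi => (hSH i).2 hi)
    (weight p ρ k H)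
  simp only [hSG, hSH] at ha hb hamin hbmin
  have hapos := pos_of_ne ha
  have hbpos := pos_of_ne hb
  set e := multiplicity p (G a) + multiplicity p (H b) with he
  have hterm : multiplicity p (G a * H b) = e :=
    multiplicity_mul hp (fin _ (mul_ne_zero ha hb))
  have hprod : ∀ i j, (weight p ρ k G i * weight p ρ k H j) =
      ρ ^ (multiplicity p (G i) + multiplicity p (H j)) / ((i * j : ℕ) : ℝ) ^ k := by
    intro i j
    simp only [weight, pow_add, Nat.cast_mul, mul_pow]
    rw [div_mul_div_comm]
  have hother : ∀ x ∈ (a * b).divisorsAntidiagonal, x ≠ (a, b) →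
      p ^ (e + 1) ∣ G x.1 * H x.2 := by
    rintro ⟨i, j⟩ hx hne
    rw [Nat.mem_divisorsAntidiagonal] at hx
    obtain ⟨hij, hab0⟩ := hx
    simp only at hij ⊢
    by_cases hi : G i = 0
    · simp [hi]
    by_cases hj : H j = 0
    · simp [hj]
    have wa := hamin i hi
    have wb := hbmin j hj
    have hwa : 0 < weight p ρ k G a := by unfold weight; positivity
    have hwb : 0 < weight p ρ k H b := by unfold weight; positivity
    have hlt : weight p ρ k G a * weight p ρ k H b < weight p ρ k G i * weight p ρ k H j := by
      by_contra hcon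
      push Not at hcon
      have h1 : weight p ρ k G i = weight p ρ k G a := by
        by_contra h
        have : weight p ρ k G a < weight p ρ k G i := lt_of_le_of_ne wa.1 (Ne.symm h)
        exact absurd (mul_lt_mul this wb.1 hwb (hwa.le.trans wa.1)) (not_lt.mpr hcon)
      have h2 : weight p ρ k H j = weight p ρ k H b := by
        by_contra h
        have : weight p ρ k H b < weight p ρ k H j := lt_of_le_of_ne wb.1 (Ne.symm h)
        exact absurd (mul_lt_mul' wa.1 this hwb.le (hwa.trans_le wa.1)) (not_lt.mpr hcon)
      have h3 := wa.2 h1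
      have h4 := wb.2 h2
      have hipos := pos_of_ne hi
      have hjpos := pos_of_ne hj
      apply hne
      have : i = a := by
        by_contra h
        have : i < a := lt_of_le_of_ne h3 h
        nlinarith
      have : j = b := by
        by_contra h
        have : j < b := lt_of_le_of_ne h4 h
        nlinarith
      simp [*]
    rw [hprod, hprod, hij, div_lt_div_iff_of_pos_right (by positivity),
      pow_lt_pow_iff_right₀ hρ] at hlt
    apply pow_dvd_of_le_multiplicity
    rw [multiplicity_mul hp (fin _ (mul_ne_zero hi hj))]
    exact hlt
  have hnd : ¬ p ^ (e + 1) ∣ (G * H) (a * b) := by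
    rw [ArithmeticFunction.mul_apply, ← Finset.add_sum_erase _ _
      (show (a, b) ∈ (a * b).divisorsAntidiagonal by
        rw [Nat.mem_divisorsAntidiagonal]; exact ⟨rfl, by positivity⟩)]
    rw [dvd_add_left (Finset.dvd_sum fun x hx => hother x (Finset.mem_of_mem_erase hx)
      (Finset.ne_of_mem_erase hx))]
    intro h
    have := (fin _ (mul_ne_zero ha hb)).le_multiplicity_of_pow_dvd h
    omega
  have hne : (G * H) (a * b) ≠ 0 := fun h => hnd (h ▸ dvd_zero _)
  refine ⟨a, b, ha, hb, fun i hi => (hamin i hi).1, fun i hi => (hbmin i hi).1, hne, ?_⟩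
  rw [hprod, weight]
  gcongr
  · exact hρ.le
  · by_contra h
    exact hnd (pow_dvd_of_le_multiplicity (by omega))

/-- If the numbers `ν_q(n) - ν_q(m)` have no common factor with `k`, a relation
`(a / i) ^ k = (n / m) ^ t` forces `k ∣ t`. -/
lemma dvd_of_pow_eq (m n k : ℕ) (hm : 0 < m) (hn : 0 < n) (hk : 0 < k)
    (hgcd : ∀ d : ℕ, ((d : ℤ) ∣ (k : ℤ) ∧
      ∀ q ∈ (m * n).primeFactors,
        (d : ℤ) ∣ (n.factorization q : ℤ) - (m.factorization q : ℤ)) → d = 1)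
    (a i t : ℕ) (ha : 0 < a) (hi : 0 < i) (h : a ^ k * m ^ t = n ^ t * i ^ k) : k ∣ t := by
  have hg : 0 < Nat.gcd k t := Nat.gcd_pos_of_pos_left _ hk
  have hd : k / Nat.gcd k t = 1 := by
    apply hgcd
    refine ⟨by exact_mod_cast Nat.div_dvd_of_dvd (Nat.gcd_dvd_left k t), fun q _ => ?_⟩
    have hq := congrArg (fun x => x.factorization q) h
    rw [Nat.factorization_mul (by positivity) (by positivity),
      Nat.factorization_mul (by positivity) (by positivity)] at hq
    simp only [Nat.factorization_pow, Finsupp.add_apply, Finsupp.smul_apply, smul_eq_mul] at hq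
    have hq' : (t : ℤ) * ((n.factorization q : ℤ) - m.factorization q) =
        k * ((a.factorization q : ℤ) - i.factorization q) := by
      zify at hq; linarith
    have hcop := Nat.coprime_div_gcd_div_gcd hg
    obtain ⟨k', hk'⟩ := Nat.gcd_dvd_left k t
    obtain ⟨t', ht'⟩ := Nat.gcd_dvd_right k t
    set g := Nat.gcd k t
    have e1 : k / g = k' := by rw [hk']; exact Nat.mul_div_cancel_left _ hg
    have e2 : t / g = t' := by rw [ht']; exact Nat.mul_div_cancel_left _ hg
    rw [e1, e2] at hcop
    rw [e1]
    have hcz : IsCoprime (k' : ℤ) (t' : ℤ) := Nat.isCoprime_iff_coprime.mpr hcop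
    apply hcz.dvd_of_dvd_mul_left
    refine ⟨(a.factorization q : ℤ) - i.factorization q, ?_⟩
    have hgz : (g : ℤ) ≠ 0 := by exact_mod_cast hg.ne'
    apply mul_left_cancel₀ hgz
    have c1 : (k : ℤ) = g * k' := by exact_mod_cast hk'
    have c2 : (t : ℤ) = g * t' := by exact_mod_cast ht'
    rw [c1, c2] at hq'
    linarith
  have : k = Nat.gcd k t := Nat.eq_of_dvd_of_div_eq_one (Nat.gcd_dvd_left k t) hd |>.symm
  rw [this]
  exact Nat.gcd_dvd_right k t

/-- Equality of the weights at `a` and at an index `i` where the `p`-adic valuation vanishes is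
`(a / i) ^ k = (n / m) ^ v_p(G a)`, stated without denominators. -/
lemma pow_eq_of_weight_eq [CommRing R] (p : R) (G : ArithmeticFunction R) (m n k a i : ℕ)
    (hm : 0 < m) (ha : 0 < a) (hi : 0 < i) (h0 : multiplicity p (G i) = 0)
    (h : weight p ((n : ℝ) / m) k G a = weight p ((n : ℝ) / m) k G i) :
    a ^ k * m ^ multiplicity p (G a) = n ^ multiplicity p (G a) * i ^ k := by
  unfold weight at h
  rw [h0, pow_zero, div_pow] at h
  have hm' : (m : ℝ) ≠ 0 := by positivity
  have ha' : (a : ℝ) ≠ 0 := by positivity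
  have hi' : (i : ℝ) ≠ 0 := by positivity
  field_simp at h
  have : ((a ^ k * m ^ multiplicity p (G a) : ℕ) : ℝ) =
      (n ^ multiplicity p (G a) * i ^ k : ℕ) := by
    push_cast; linarith
  exact_mod_cast this

lemma eq_one_of_multiplicity_zero (m n k a i b t : ℕ) (hk : 0 < k) (hcop : Nat.gcd m n = 1)
    (ht : t = 0) (h : a ^ k * m ^ t = n ^ t * i ^ k) (him : i ∣ m) (hab : a * b = n) : a = 1 := by
  subst ht
  have : a = i := Nat.pow_left_injective hk.ne' (by simpa using h)
  subst this
  exact Nat.eq_one_of_dvd_coprimes hcop him ⟨b, hab.symm⟩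

lemma exists_degree [Zero R] (G : ArithmeticFunction R) (hG : IsDP G) (hN : Nonconst G) :
    ∃ a, 2 ≤ a ∧ G a ≠ 0 ∧ ∀ i, G i ≠ 0 → i ≤ a := by
  obtain ⟨x, hx2, hx⟩ := hN
  obtain ⟨S, hS⟩ := hG.exists_finset
  obtain ⟨a, ha, hmax⟩ := S.exists_max_image id ⟨x, (hS x).2 hx⟩
  simp only [hS, id] at ha hmax
  exact ⟨a, hx2.trans (hmax x hx), ha, hmax⟩

/-- Cavachi-type criterion. If `deg f = m < n = deg g` are coprime, `p`
is a prime element dividing neither leading coefficient, and `k` is a positive integer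
whose gcd with the differences `ν_q(n) - ν_q(m)` (over primes `q ∣ m·n`) is `1`, then
`f + p^k·g` is irreducible. -/
theorem linear_combination_irreducible
    [CommRing R] [IsDomain R] [UniqueFactorizationMonoid R]
    (f g : ArithmeticFunction R) (hf : IsDP f) (hg : IsDP g)
    (m n : ℕ) (hmn : m < n) (hcop : Nat.gcd m n = 1)
    (hfm : f m ≠ 0) (hf' : ∀ i : ℕ, m < i → f i = 0)
    (hgn : g n ≠ 0) (hg' : ∀ i : ℕ, n < i → g i = 0)
    (p : R) (hp : Prime p) (hpf : ¬ p ∣ f m) (hpg : ¬ p ∣ g n)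
    (k : ℕ) (hk : 0 < k)
    (hgcd : ∀ d : ℕ, ((d : ℤ) ∣ (k : ℤ) ∧
      ∀ q ∈ (m * n).primeFactors,
        (d : ℤ) ∣ (n.factorization q : ℤ) - (m.factorization q : ℤ)) → d = 1)
    (F : ArithmeticFunction R) (hF : ∀ i : ℕ, F i = f i + p ^ k * g i) :
    IrreducibleDP F := by
  rintro ⟨G, H, hG, hH, hGN, hHN, hFGH⟩
  have fin : ∀ x : R, x ≠ 0 → FiniteMultiplicity p x := fun x hx =>
    FiniteMultiplicity.of_not_isUnit hp.not_isUnit hx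
  have hm : 0 < m := pos_of_ne hfm
  have hn : 0 < n := hm.trans hmn
  have hmR : (0 : ℝ) < m := by exact_mod_cast hm
  have hnR : (0 : ℝ) < n := by exact_mod_cast hn
  obtain ⟨a, ha2, ha, hamax⟩ := exists_degree G hG hGN
  obtain ⟨b, hb2, hb, hbmax⟩ := exists_degree H hH hHN
  have hFn : F n = p ^ k * g n := by rw [hF, hf' n hmn, zero_add]
  have hFn0 : F n ≠ 0 := by rw [hFn]; exact mul_ne_zero (pow_ne_zero _ hp.ne_zero) hgn
  have hFtop : ∀ i, n < i → F i = 0 := fun i hi => by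
    rw [hF, hf' i (hmn.trans hi), hg' i hi]; simp
  have hFab : F (a * b) = G a * H b := by
    rw [hFGH, ArithmeticFunction.mul_apply]
    apply Finset.sum_eq_single_of_mem (a, b)
    · rw [Nat.mem_divisorsAntidiagonal]; exact ⟨rfl, by positivity⟩
    · rintro ⟨i, j⟩ hx hne
      rw [Nat.mem_divisorsAntidiagonal] at hx
      simp only at hx ⊢
      by_contra hcon
      have hi := hamax i (left_ne_zero_of_mul hcon)
      have hj := hbmax j (right_ne_zero_of_mul hcon)
      have hij := hx.1
      apply hne
      have : i = a := by
        by_contra h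
        have : i < a := lt_of_le_of_ne hi h
        nlinarith
      have : j = b := by
        by_contra h
        have : j < b := lt_of_le_of_ne hj h
        nlinarith
      simp [*]
  have hab : a * b = n := by
    apply le_antisymm
    · by_contra h
      exact mul_ne_zero ha hb (hFab ▸ hFtop _ (not_le.mp h))
    · have h := hFn0
      rw [hFGH, ArithmeticFunction.mul_apply] at h
      obtain ⟨⟨i, j⟩, hx, hij⟩ := Finset.exists_ne_zero_of_sum_ne_zero h
      rw [Nat.mem_divisorsAntidiagonal] at hx
      rw [← hx.1]
      exact Nat.mul_le_mul (hamax i (left_ne_zero_of_mul hij)) (hbmax j (right_ne_zero_of_mul hij))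
  have hts : multiplicity p (G a) + multiplicity p (H b) = k := by
    rw [← multiplicity_mul hp (fin _ (mul_ne_zero ha hb)), ← hFab, hab, hFn,
      multiplicity_mul hp (fin _ (hFn ▸ hFn0)), multiplicity_eq_zero.mpr hpg,
      multiplicity_pow_self hp.ne_zero hp.not_isUnit, add_zero]
  -- `p` does not divide `F m`, so some summand of the convolution at `m` is prime to `p`.
  have hFm : ¬ p ∣ F m := by
    rw [hF, dvd_add_left (dvd_mul_of_dvd_left (dvd_pow_self p hk.ne') _)]
    exact hpf
  obtain ⟨i, j, hij, hGi, hHj⟩ : ∃ i j, i * j = m ∧ ¬ p ∣ G i ∧ ¬ p ∣ H j := by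
    by_contra hcon
    push Not at hcon
    apply hFm
    rw [hFGH, ArithmeticFunction.mul_apply]
    refine Finset.dvd_sum fun x hx => ?_
    rw [Nat.mem_divisorsAntidiagonal] at hx
    by_cases h : p ∣ G x.1
    · exact dvd_mul_of_dvd_left h _
    · exact dvd_mul_of_dvd_right (hcon _ _ hx.1 h) _
  have hGi0 : G i ≠ 0 := fun h => hGi (h ▸ dvd_zero p)
  have hHj0 : H j ≠ 0 := fun h => hHj (h ▸ dvd_zero p)
  have hmi := multiplicity_eq_zero.mpr hGi
  have hmj := multiplicity_eq_zero.mpr hHj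
  have hρ : 1 < (n : ℝ) / m := by
    rw [one_lt_div hmR]; exact_mod_cast hmn
  -- All points of the Newton diagram of `F` lie on or above the line through those of `m` and `n`.
  have hFw : ∀ x, F x ≠ 0 → 1 / (m : ℝ) ^ k ≤ weight p ((n : ℝ) / m) k F x := by
    intro x hx
    have hxpos := pos_of_ne hx
    have hxR : (0 : ℝ) < x := by exact_mod_cast hxpos
    unfold weight
    rcases le_or_gt x m with hxm | hxm
    · have h1 : (1 : ℝ) ≤ ((n : ℝ) / m) ^ multiplicity p (F x) := one_le_pow₀ hρ.le
      gcongr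
    · have hxn : x ≤ n := by
        by_contra h
        exact hx (hFtop x (not_le.mp h))
      have hkx : k ≤ multiplicity p (F x) := by
        apply (fin _ hx).le_multiplicity_of_pow_dvd
        rw [hF, hf' x hxm, zero_add]
        exact dvd_mul_right _ _
      calc 1 / (m : ℝ) ^ k = ((n : ℝ) / m) ^ k / (n : ℝ) ^ k := by
            rw [div_pow]; field_simp
        _ ≤ ((n : ℝ) / m) ^ multiplicity p (F x) / (x : ℝ) ^ k := by
            gcongr
            exact hρ.le
  obtain ⟨a₀, b₀, ha₀, hb₀, hamin, hbmin, hne, hle⟩ := exists_weight_mul_le G H hG hH ⟨a, ha⟩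
    ⟨b, hb⟩ p hp _ hρ k
  rw [← hFGH] at hne hle
  have hlow := (hFw _ hne).trans hle
  have haR : (0 : ℝ) < a := by positivity
  have hbR : (0 : ℝ) < b := by positivity
  have hipos := pos_of_ne hGi0
  have hjpos := pos_of_ne hHj0
  have hwab : weight p ((n : ℝ) / m) k G a * weight p ((n : ℝ) / m) k H b = 1 / (m : ℝ) ^ k := by
    unfold weight
    rw [div_mul_div_comm, ← pow_add, hts, ← mul_pow, ← Nat.cast_mul, hab, div_pow]
    field_simp
  have hwij : weight p ((n : ℝ) / m) k G i * weight p ((n : ℝ) / m) k H j = 1 / (m : ℝ) ^ k := by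
    unfold weight
    rw [div_mul_div_comm, ← pow_add, hmi, hmj, ← mul_pow, ← Nat.cast_mul, hij]
    simp
  have hGpos : ∀ x, 0 < x → 0 < weight p ((n : ℝ) / m) k G x := fun x hx => by
    unfold weight; positivity
  have hHpos : ∀ x, 0 < x → 0 < weight p ((n : ℝ) / m) k H x := fun x hx => by
    unfold weight; positivity
  -- Weights at least the minima whose product is at most the product of minima are the minima.
  have key : ∀ u v u' v' : ℝ, 0 < u → 0 < v → u ≤ u' → v ≤ v' → u' * v' ≤ u * v →
      u' = u ∧ v' = v := by
    intro u v u' v' hu hv h1 h2 h3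
    constructor
    · apply le_antisymm _ h1
      by_contra h
      nlinarith [mul_lt_mul (not_le.mp h) h2 hv (hu.le.trans h1)]
    · apply le_antisymm _ h2
      by_contra h
      nlinarith [mul_lt_mul' h1 (not_le.mp h) hv.le (hu.trans_le h1)]
  have k1 := key _ _ _ _ (hGpos a₀ (pos_of_ne ha₀)) (hHpos b₀ (pos_of_ne hb₀)) (hamin a ha)
    (hbmin b hb) (hwab.trans_le hlow)
  have k2 := key _ _ _ _ (hGpos a₀ (pos_of_ne ha₀)) (hHpos b₀ (pos_of_ne hb₀)) (hamin i hGi0)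
    (hbmin j hHj0) (hwij.trans_le hlow)
  have eG := pow_eq_of_weight_eq p G m n k a i hm (by omega) hipos hmi (k1.1.trans k2.1.symm)
  have eH := pow_eq_of_weight_eq p H m n k b j hm (by omega) hjpos hmj (k1.2.trans k2.2.symm)
  obtain ⟨c, hc⟩ := dvd_of_pow_eq m n k hm hn hk hgcd a i _ (by omega) hipos eG
  -- The valuation of `G a` is a multiple of `k` between `0` and `k`.
  rcases Nat.eq_zero_or_pos c with rfl | hcpos
  · have := eq_one_of_multiplicity_zero m n k a i b _ hk hcop (by simpa using hc) eG
      ⟨j, hij.symm⟩ hab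
    omega
  · have hkc : k ≤ k * c := Nat.le_mul_of_pos_right k hcpos
    have := eq_one_of_multiplicity_zero m n k b j a _ hk hcop (by omega) eH
      ⟨i, by rw [mul_comm, hij]⟩ (by rw [mul_comm, hab])
    omega

end DirichletPoly
end
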